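/- For integers k, j ≥ 0: if μ > −1 and k ≥ 1 then ∂/∂z Q^μ_{k,j}(z,w) = (k(j+μ+1)/(μ+1)) Q^{μ+1}_{k−1,j}(z,w), while for k = 0 the left-hand side vanishes; and if μ > 0 then (1−zw) ∂/∂z̄ Q^μ_{k,j}(z,w) − μ z Q^μ_{k,j}(z,w) = −μ Q^{μ−1}_{k+1,j}(z,w). These are identities of bivariate polynomials in (z,w). -/

import Mathlib

noncomputable def jacobiP (α β : ℝ) (n : ℕ) : Polynomial ℝ :=
  (n.factorial : ℝ)⁻¹ •
    ∑ k ∈ Finset.range (n + 1),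
      ((n.choose k : ℝ) * ((ascPochhammer ℝ (n - k)).eval ((k : ℝ) + α + 1)) *
          ((ascPochhammer ℝ k).eval ((n : ℝ) + α + β + 1))) •
        ((Polynomial.X - 1) * Polynomial.C (2⁻¹ : ℝ)) ^ k

noncomputable def zernikeQ (μ : ℝ) (k j : ℕ) : MvPolynomial (Fin 2) ℂ :=
  if j ≤ k then
    MvPolynomial.C ((((j.factorial : ℝ) / ((ascPochhammer ℝ j).eval (μ + 1)) : ℝ) : ℂ)) *
      MvPolynomial.X 0 ^ (k - j) *
      Polynomial.aeval (2 * MvPolynomial.X 0 * MvPolynomial.X 1 - 1)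
        (jacobiP μ ((k - j : ℕ) : ℝ) j)
  else
    MvPolynomial.C ((((k.factorial : ℝ) / ((ascPochhammer ℝ k).eval (μ + 1)) : ℝ) : ℂ)) *
      MvPolynomial.X 1 ^ (j - k) *
      Polynomial.aeval (2 * MvPolynomial.X 0 * MvPolynomial.X 1 - 1)
        (jacobiP μ ((j - k : ℕ) : ℝ) k)

/-- The hypergeometric form `∑ (n choose m) (c)_m / (μ+1)_m Y^m` of the normalized Jacobi polynomial
`n! / (μ+1)_n P_n^{(μ,β)}(2Y+1)`, where `c = n + μ + β + 1`. -/
noncomputable def hypergeomPoly (n : ℕ) (c μ : ℝ) : Polynomial ℝ :=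
  ∑ m ∈ Finset.range (n + 1),
    Polynomial.C ((n.choose m : ℝ) * (ascPochhammer ℝ m).eval c / (ascPochhammer ℝ m).eval (μ + 1)) *
      Polynomial.X ^ m

theorem hypergeomPoly_coeff (n : ℕ) (c μ : ℝ) (m : ℕ) :
    (hypergeomPoly n c μ).coeff m =
      (n.choose m : ℝ) * (ascPochhammer ℝ m).eval c / (ascPochhammer ℝ m).eval (μ + 1) := by
  simp only [hypergeomPoly, Polynomial.finsetSum_coeff, Polynomial.coeff_C_mul_X_pow,
    Finset.sum_ite_eq, Finset.mem_range]
  split_ifs with h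
  · rfl
  · rw [Nat.choose_eq_zero_of_lt (by omega)]
    simp

theorem hypergeomPoly_zero (c μ : ℝ) : hypergeomPoly 0 c μ = 1 := by
  simp [hypergeomPoly]

theorem ascPochhammer_eval_succ_left (m : ℕ) (x : ℝ) :
    (ascPochhammer ℝ (m + 1)).eval x = x * (ascPochhammer ℝ m).eval (x + 1) := by
  simp [ascPochhammer_succ_left]

theorem ascPochhammer_eval_mul_shift {n m : ℕ} (h : m ≤ n) (x : ℝ) :
    (ascPochhammer ℝ n).eval x =
      (ascPochhammer ℝ m).eval x * (ascPochhammer ℝ (n - m)).eval (m + x) := by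
  have := congrArg (Polynomial.eval x) (ascPochhammer_mul ℝ m (n - m))
  rw [Nat.add_sub_cancel' h] at this
  rw [← this]
  simp [add_comm]

theorem succ_mul_cast_choose_succ (n m : ℕ) :
    ((m : ℝ) + 1) * (n.choose (m + 1) : ℝ) = ((n : ℝ) - m) * (n.choose m : ℝ) := by
  rcases le_or_gt m n with h | h
  · have := Nat.choose_succ_right_eq n m
    rw [← Nat.cast_sub h]
    exact_mod_cast (by linarith : (m + 1) * n.choose (m + 1) = (n - m) * n.choose m)
  · simp [Nat.choose_eq_zero_of_lt h, Nat.choose_eq_zero_of_lt (Nat.lt_succ_of_lt h)]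

section Bivariate

open MvPolynomial

theorem algebraMap_real_eq_C (r : ℝ) :
    algebraMap ℝ (MvPolynomial (Fin 2) ℂ) r = C (r : ℂ) := rfl

theorem aeval_jacobiP (μ β : ℝ) (n : ℕ) (hn : (ascPochhammer ℝ n).eval (μ + 1) ≠ 0) :
    C ((((n.factorial : ℝ) / ((ascPochhammer ℝ n).eval (μ + 1)) : ℝ) : ℂ)) *
      Polynomial.aeval (2 * X 0 * X 1 - 1 : MvPolynomial (Fin 2) ℂ) (jacobiP μ β n) =
    Polynomial.aeval (X 0 * X 1 - 1 : MvPolynomial (Fin 2) ℂ)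
      (hypergeomPoly n (n + μ + β + 1) μ) := by
  have hlin : Polynomial.aeval (2 * X 0 * X 1 - 1 : MvPolynomial (Fin 2) ℂ)
      ((Polynomial.X - 1) * Polynomial.C (2⁻¹ : ℝ)) = X 0 * X 1 - 1 := by
    have h2 : (2 : MvPolynomial (Fin 2) ℂ) * algebraMap ℝ (MvPolynomial (Fin 2) ℂ) 2⁻¹ = 1 := by
      rw [← map_ofNat (algebraMap ℝ (MvPolynomial (Fin 2) ℂ)) 2, ← map_mul]
      norm_num
    simp only [map_mul, map_sub, Polynomial.aeval_X, map_one, Polynomial.aeval_C]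
    linear_combination (X 0 * X 1 - 1) * h2
  rw [← algebraMap_real_eq_C, jacobiP, hypergeomPoly, map_smul, map_sum, map_sum,
    Algebra.smul_def, ← mul_assoc, ← map_mul, Finset.mul_sum]
  refine Finset.sum_congr rfl fun m hm => ?_
  have hmn : m ≤ n := by simpa [Nat.lt_succ_iff] using hm
  rw [map_smul, map_pow, hlin, Algebra.smul_def, ← mul_assoc, ← map_mul,
    map_mul (Polynomial.aeval _), map_pow, Polynomial.aeval_X, Polynomial.aeval_C]
  congr 2
  have hs := ascPochhammer_eval_mul_shift hmn (μ + 1)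
  rw [hs] at hn ⊢
  rw [← add_assoc] at hn ⊢
  have h1 := left_ne_zero_of_mul hn
  have h2 := right_ne_zero_of_mul hn
  have h3 : (n.factorial : ℝ) ≠ 0 := by positivity
  field_simp

theorem zernikeQ_of_le {μ : ℝ} {k j : ℕ} (hn : (ascPochhammer ℝ j).eval (μ + 1) ≠ 0)
    (h : j ≤ k) :
    zernikeQ μ k j = X 0 ^ (k - j) *
      Polynomial.aeval (X 0 * X 1 - 1 : MvPolynomial (Fin 2) ℂ)
        (hypergeomPoly j (k + μ + 1) μ) := by
  have := aeval_jacobiP μ ((k - j : ℕ) : ℝ) j hn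
  rw [Nat.cast_sub h, show (j : ℝ) + μ + (k - j) + 1 = k + μ + 1 by ring, ← Nat.cast_sub h] at this
  rw [zernikeQ, if_pos h, ← this]
  ring

/-- On the diagonal both cases of the definition agree, so the second one also covers `k = j`. -/
theorem zernikeQ_of_ge {μ : ℝ} {k j : ℕ} (hn : (ascPochhammer ℝ k).eval (μ + 1) ≠ 0)
    (h : k ≤ j) :
    zernikeQ μ k j = X 1 ^ (j - k) *
      Polynomial.aeval (X 0 * X 1 - 1 : MvPolynomial (Fin 2) ℂ)
        (hypergeomPoly k (j + μ + 1) μ) := by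
  rcases h.eq_or_lt with rfl | h'
  · simpa using zernikeQ_of_le hn h
  have := aeval_jacobiP μ ((j - k : ℕ) : ℝ) k hn
  rw [Nat.cast_sub h, show (k : ℝ) + μ + (j - k) + 1 = j + μ + 1 by ring, ← Nat.cast_sub h] at this
  rw [zernikeQ, if_neg h'.not_ge, ← this]
  ring

theorem pderiv_aeval_real (i : Fin 2) (x : MvPolynomial (Fin 2) ℂ) (p : Polynomial ℝ) :
    pderiv i (Polynomial.aeval x p) =
      Polynomial.aeval x (Polynomial.derivative p) * pderiv i x :=
  ((pderiv i).restrictScalars ℝ).map_aeval p x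

end Bivariate

open Polynomial in
theorem hypergeomPoly_lower_left {μ : ℝ} (hμ : -1 < μ) (k j : ℕ) :
    C ((k : ℝ) - j) * hypergeomPoly j (k + μ + 1) μ +
        (X + 1) * derivative (hypergeomPoly j (k + μ + 1) μ) =
      C ((k : ℝ) * (j + μ + 1) / (μ + 1)) * hypergeomPoly j (k + μ + 1) (μ + 1) := by
  ext m
  have hd : (X * derivative (hypergeomPoly j (k + μ + 1) μ)).coeff m =
      m * (hypergeomPoly j (k + μ + 1) μ).coeff m := by
    cases m <;> simp [coeff_derivative, mul_comm]
  rw [add_mul, one_mul, coeff_add, coeff_add, hd, coeff_C_mul, coeff_C_mul, coeff_derivative]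
  simp only [hypergeomPoly_coeff]
  have hch := succ_mul_cast_choose_succ j m
  have hR := ascPochhammer_succ_eval m (μ + 1)
  have hL := ascPochhammer_eval_succ_left m (μ + 1)
  have hc := ascPochhammer_succ_eval m (k + μ + 1)
  have p1 : 0 < (ascPochhammer ℝ m).eval (μ + 1) := ascPochhammer_pos _ _ (by linarith)
  have p2 : 0 < (ascPochhammer ℝ m).eval (μ + 1 + 1) := ascPochhammer_pos _ _ (by linarith)
  have hμ' : 0 < μ + 1 := by linarith
  have hμm : 0 < μ + 1 + m := by positivity
  have he : (ascPochhammer ℝ m).eval (μ + 1 + 1) =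
      (ascPochhammer ℝ m).eval (μ + 1) * (μ + 1 + m) / (μ + 1) := by
    field_simp
    linarith
  rw [hc, hR, he]
  field_simp
  linear_combination (ascPochhammer ℝ m).eval (k + μ + 1) * (k + μ + 1 + m) * hch

open Polynomial in
theorem hypergeomPoly_derivative (n : ℕ) (c μ : ℝ) :
    derivative (hypergeomPoly (n + 1) c μ) =
      C (((n : ℝ) + 1) * c / (μ + 1)) * hypergeomPoly n (c + 1) (μ + 1) := by
  ext m
  rw [coeff_C_mul, coeff_derivative]
  simp only [hypergeomPoly_coeff, ascPochhammer_eval_succ_left m]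
  have hch : ((n : ℝ) + 1) * n.choose m = (n + 1).choose (m + 1) * (m + 1) := by
    exact_mod_cast Nat.add_one_mul_choose_eq n m
  simp only [div_eq_mul_inv, mul_inv]
  linear_combination (-c * eval (c + 1) (ascPochhammer ℝ m) * (μ + 1)⁻¹ *
    (eval (μ + 1 + 1) (ascPochhammer ℝ m))⁻¹) * hch

open Polynomial in
theorem hypergeomPoly_euler {μ : ℝ} (hμ : 0 < μ) (n : ℕ) (c : ℝ) :
    X * derivative (hypergeomPoly n c μ) + C μ * hypergeomPoly n c μ =
      C μ * hypergeomPoly n c (μ - 1) := by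
  ext m
  have hd : (X * derivative (hypergeomPoly n c μ)).coeff m =
      m * (hypergeomPoly n c μ).coeff m := by
    cases m <;> simp [coeff_derivative, mul_comm]
  rw [coeff_add, hd, coeff_C_mul, coeff_C_mul]
  simp only [hypergeomPoly_coeff, sub_add_cancel]
  have hR := ascPochhammer_succ_eval m μ
  rw [ascPochhammer_eval_succ_left] at hR
  have p1 : 0 < (ascPochhammer ℝ m).eval (μ + 1) := ascPochhammer_pos _ _ (by linarith)
  have p2 : 0 < (ascPochhammer ℝ m).eval μ := ascPochhammer_pos _ _ hμ
  field_simp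
  linear_combination (-(n.choose m : ℝ) * eval c (ascPochhammer ℝ m)) * hR

open Polynomial in
theorem hypergeomPoly_raise {μ : ℝ} (hμ : 0 < μ) (k j : ℕ) :
    C ((j : ℝ) - k) * (X * hypergeomPoly k (j + μ + 1) μ) +
        (X + 1) * (X * derivative (hypergeomPoly k (j + μ + 1) μ) +
          C μ * hypergeomPoly k (j + μ + 1) μ) =
      C μ * hypergeomPoly (k + 1) (j + μ) (μ - 1) := by
  ext m
  rcases m with _ | m
  · simp [hypergeomPoly_coeff, add_mul]
  have hd : (X * derivative (hypergeomPoly k (j + μ + 1) μ)).coeff m =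
      m * (hypergeomPoly k (j + μ + 1) μ).coeff m := by
    cases m <;> simp [coeff_derivative, mul_comm]
  simp only [add_mul, one_mul, coeff_add, coeff_C_mul, coeff_X_mul, hd, coeff_derivative]
  simp only [hypergeomPoly_coeff, sub_add_cancel, Nat.choose_succ_succ, Nat.cast_add]
  have hch := succ_mul_cast_choose_succ k m
  have p1 : 0 < (ascPochhammer ℝ m).eval (μ + 1) := ascPochhammer_pos _ _ (by linarith)
  have hμm : 0 < μ + 1 + m := by positivity
  rw [ascPochhammer_succ_eval m (μ + 1), ascPochhammer_succ_eval m (j + μ + 1),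
    ascPochhammer_eval_succ_left m μ, ascPochhammer_eval_succ_left m (j + μ)]
  field_simp
  linear_combination (ascPochhammer ℝ m).eval (j + μ + 1) * (μ + 1 + m) * hch

open MvPolynomial in
theorem zernike_ladder_Z1 (μ : ℝ) (k j : ℕ) :
    (μ > -1 → 1 ≤ k →
      pderiv (0 : Fin 2) (zernikeQ μ k j) =
        C ((((k : ℝ) * ((j : ℝ) + μ + 1) / (μ + 1) : ℝ)) : ℂ) *
          zernikeQ (μ + 1) (k - 1) j) ∧
    (k = 0 → pderiv (0 : Fin 2) (zernikeQ μ k j) = 0) ∧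
    (μ > 0 →
      (1 - X 0 * X 1) * pderiv (1 : Fin 2) (zernikeQ μ k j) -
          C ((μ : ℂ)) * X 0 * zernikeQ μ k j =
        -(C ((μ : ℂ)) * zernikeQ (μ - 1) (k + 1) j)) := by
  have hne : ∀ {ν : ℝ}, -1 < ν → ∀ n, (ascPochhammer ℝ n).eval (ν + 1) ≠ 0 :=
    fun hν n => (ascPochhammer_pos n _ (by linarith)).ne'
  have h01 : pderiv (0 : Fin 2) (X 1 : MvPolynomial (Fin 2) ℂ) = 0 :=
    pderiv_X_of_ne (by decide)
  have h10 : pderiv (1 : Fin 2) (X 0 : MvPolynomial (Fin 2) ℂ) = 0 :=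
    pderiv_X_of_ne (by decide)
  have hy0 : pderiv (0 : Fin 2) (X 0 * X 1 - 1 : MvPolynomial (Fin 2) ℂ) = X 1 := by
    simp [h01]
  have hy1 : pderiv (1 : Fin 2) (X 0 * X 1 - 1 : MvPolynomial (Fin 2) ℂ) = X 0 := by
    simp [h10]
  refine ⟨fun hμ hk => ?_, fun hk => ?_, fun hμ => ?_⟩
  · obtain ⟨k, rfl⟩ := Nat.exists_eq_succ_of_ne_zero (by omega : k ≠ 0)
    rw [Nat.succ_eq_add_one, Nat.add_sub_cancel]
    rcases le_or_gt j k with h | h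
    · rw [zernikeQ_of_le (hne hμ j) (by omega), zernikeQ_of_le (hne (by linarith) j) h,
        Derivation.leibniz, Derivation.leibniz_pow, pderiv_aeval_real, hy0, pderiv_X_self]
      have key := congrArg (Polynomial.aeval (X 0 * X 1 - 1 : MvPolynomial (Fin 2) ℂ))
        (hypergeomPoly_lower_left hμ (k + 1) j)
      obtain ⟨a, rfl⟩ := Nat.exists_eq_add_of_le h
      rw [show j + a + 1 - j = a + 1 by omega, show j + a - j = a by omega]
      rw [show ((j + a : ℕ) : ℝ) + (μ + 1) + 1 = ((j + a + 1 : ℕ) : ℝ) + μ + 1 by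
        push_cast; ring]
      rw [show ((j + a + 1 : ℕ) : ℝ) - j = ((a + 1 : ℕ) : ℝ) by push_cast; ring] at key
      simp only [map_add, map_mul, Polynomial.aeval_C, Polynomial.aeval_X, map_one,
        map_natCast] at key
      rw [algebraMap_real_eq_C] at key
      simp only [smul_eq_mul, nsmul_eq_mul, Nat.add_sub_cancel]
      linear_combination X 0 ^ a * key
    · rw [zernikeQ_of_ge (hne hμ _) (by omega), zernikeQ_of_ge (hne (by linarith) _) h.le,
        Derivation.leibniz, Derivation.leibniz_pow, pderiv_aeval_real, hy0, h01,
        hypergeomPoly_derivative, map_mul, Polynomial.aeval_C, algebraMap_real_eq_C]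
      obtain ⟨b, rfl⟩ := Nat.exists_eq_add_of_le (Nat.succ_le_of_lt h)
      rw [show k.succ + b - (k + 1) = b by omega, show k.succ + b - k = b + 1 by omega]
      rw [show ((k.succ + b : ℕ) : ℝ) + (μ + 1) + 1 = ((k.succ + b : ℕ) : ℝ) + μ + 1 + 1 by ring,
        Nat.cast_add_one k]
      simp only [smul_eq_mul]
      ring
  · subst hk
    rw [zernikeQ_of_ge (by simp) (Nat.zero_le j), hypergeomPoly_zero, map_one, mul_one,
      Derivation.leibniz_pow, h01]
    simp
  · rcases le_or_gt j k with h | h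
    · rw [zernikeQ_of_le (hne (by linarith) j) h,
        zernikeQ_of_le (hne (by linarith) j) (by omega : j ≤ k + 1),
        Derivation.leibniz, Derivation.leibniz_pow, pderiv_aeval_real, hy1, h10]
      have key := congrArg (Polynomial.aeval (X 0 * X 1 - 1 : MvPolynomial (Fin 2) ℂ))
        (hypergeomPoly_euler hμ j (k + μ + 1))
      rw [show ((k + 1 : ℕ) : ℝ) + (μ - 1) + 1 = (k : ℝ) + μ + 1 by push_cast; ring,
        show k + 1 - j = (k - j) + 1 by omega]
      simp only [map_add, map_mul, Polynomial.aeval_C, Polynomial.aeval_X] at key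
      rw [algebraMap_real_eq_C] at key
      simp only [smul_eq_mul]
      linear_combination (-X 0 ^ (k - j + 1)) * key
    · rw [zernikeQ_of_ge (hne (by linarith) k) h.le,
        zernikeQ_of_ge (hne (by linarith) _) (by omega : k + 1 ≤ j),
        Derivation.leibniz, Derivation.leibniz_pow, pderiv_aeval_real, hy1, pderiv_X_self]
      have key := congrArg (Polynomial.aeval (X 0 * X 1 - 1 : MvPolynomial (Fin 2) ℂ))
        (hypergeomPoly_raise hμ k j)
      obtain ⟨b, rfl⟩ := Nat.exists_eq_add_of_le (Nat.succ_le_of_lt h)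
      rw [show k.succ + b - (k + 1) = b by omega, show k.succ + b - k = b + 1 by omega]
      rw [show ((k.succ + b : ℕ) : ℝ) + (μ - 1) + 1 = ((k.succ + b : ℕ) : ℝ) + μ by ring]
      rw [show ((k.succ + b : ℕ) : ℝ) - k = ((b + 1 : ℕ) : ℝ) by push_cast; ring] at key
      simp only [map_add, map_mul, Polynomial.aeval_C, Polynomial.aeval_X, map_one,
        map_natCast] at key
      rw [algebraMap_real_eq_C] at key
      simp only [smul_eq_mul, nsmul_eq_mul, Nat.add_sub_cancel]
      linear_combination (-X 1 ^ b) * key
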